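/- arXiv:2310.09287 — 3 statements merged into one kernel-verified Lean document; each statement's English description precedes it below -/
import Mathlib

section
/- Let S be a numerical semigroup with m(S) ≥ 2. If S is a MANS-semigroup, then there exists a positive integer a such that r(S) = a·m(S) + 1. -/
/-- `S ⊆ ℕ` is a numerical semigroup: contains `0`, closed under addition,
and has finite complement in `ℕ`. -/
def IsNumSgp (S : Set ℕ) : Prop :=
  0 ∈ S ∧ (∀ a ∈ S, ∀ b ∈ S, a + b ∈ S) ∧ Sᶜ.Finite

/-- `⟨A⟩`: the additive submonoid of `ℕ` generated by `A`, viewed as a set. -/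
def gen (A : Set ℕ) : Set ℕ := (AddSubmonoid.closure A : Set ℕ)

/-- The multiplicity `m(S)`: the least nonzero element of `S`. -/
noncomputable def nsMult (S : Set ℕ) : ℕ := sInf {x | x ∈ S ∧ x ≠ 0}

/-- The minimal system of generators of `S`: the nonzero elements of `S` that are
not a sum of two nonzero elements of `S`. -/
def msg (S : Set ℕ) : Set ℕ :=
  {x | x ∈ S ∧ x ≠ 0 ∧ ∀ a ∈ S, a ≠ 0 → ∀ b ∈ S, b ≠ 0 → x ≠ a + b}

/-- The ratio `r(S)`: the second smallest minimal generator of `S`. -/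
noncomputable def nsRatio (S : Set ℕ) : ℕ := sInf (msg S \ {nsMult S})

/-- The maximum minimal generator `M(S)`. -/
noncomputable def nsMaxGen (S : Set ℕ) : ℕ := sSup (msg S)

/-- The Apéry set `Ap(S, n) = {s ∈ S : s - n ∉ S}`. -/
def AperySet (S : Set ℕ) (n : ℕ) : Set ℕ :=
  {s | s ∈ S ∧ ¬ ∃ y ∈ S, y + n = s}

/-- `w(i)`: the least element of `S` congruent to `i` modulo `n`. -/
noncomputable def aperyW (S : Set ℕ) (n i : ℕ) : ℕ :=
  sInf {s | s ∈ S ∧ s % n = i % n}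

/-- A MANS-semigroup: a numerical semigroup whose Apéry set with respect to the
multiplicity is monotone, i.e. `w(1) < w(2) < ⋯ < w(m(S) - 1)`. -/
def IsMANS (S : Set ℕ) : Prop :=
  IsNumSgp S ∧ ∀ i : ℕ, 0 < i → i + 1 < nsMult S →
    aperyW S (nsMult S) i < aperyW S (nsMult S) (i + 1)

/-- The Frobenius number `F(S)`: the greatest integer not in `S`. -/
noncomputable def nsFrob (S : Set ℕ) : ℕ := sSup {x | x ∉ S}

/-- The genus `g(S)`: the number of gaps of `S`. -/
noncomputable def nsGenus (S : Set ℕ) : ℕ := Set.ncard {x | x ∉ S}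

/-- The set of pseudo-Frobenius numbers of `S`: integers `x ∉ S` such that
`x + s ∈ S` for every nonzero `s ∈ S`. -/
def nsPF (S : Set ℕ) : Set ℤ :=
  {x : ℤ | x ∉ ((Nat.cast : ℕ → ℤ) '' S) ∧
    ∀ s ∈ S, s ≠ 0 → x + (s : ℤ) ∈ ((Nat.cast : ℕ → ℤ) '' S)}

/-- The type `t(S)`: the number of pseudo-Frobenius numbers of `S`. -/
noncomputable def nsType (S : Set ℕ) : ℕ := (nsPF S).ncard

/-- `S` is pseudo-symmetric iff `F(S) = 2 g(S) - 2`. -/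
def IsPseudoSymmetric (S : Set ℕ) : Prop :=
  (nsFrob S : ℤ) = 2 * (nsGenus S : ℤ) - 2

/-!
The ratio of `S` is the least element of `S` that is not a multiple of `m = m(S)`. Indeed, if that
element were a sum of two nonzero elements of `S`, one of the summands would be a smaller
non-multiple of `m`; conversely, the only minimal generator divisible by `m` is `m` itself. Hence
`r(S)` is the smallest of `w(1), …, w(m - 1)`, which is `w(1) ≡ 1 (mod m)` for a
MANS-semigroup.
-/

section

variable {S : Set ℕ} {n i x : ℕ}

theorem nsMult_mem (hx : x ∈ S) (hx0 : x ≠ 0) : nsMult S ∈ S :=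
  (Nat.sInf_mem (s := {s | s ∈ S ∧ s ≠ 0}) ⟨x, hx, hx0⟩).1

theorem nsMult_le (hx : x ∈ S) (hx0 : x ≠ 0) : nsMult S ≤ x :=
  Nat.sInf_le ⟨hx, hx0⟩

theorem exists_mem_modEq (hS : Sᶜ.Finite) (hn : n ≠ 0) (i : ℕ) : ∃ s ∈ S, s ≡ i [MOD n] := by
  have eventually_mem : ∀ᶠ s in Filter.atTop, s ∈ S :=
    Nat.cofinite_eq_atTop ▸ Filter.mem_cofinite.2 hS
  obtain ⟨s, hsi, hsS⟩ := ((Nat.frequently_modEq hn i).and_eventually eventually_mem).exists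
  exact ⟨s, hsS, hsi⟩

theorem aperyW_mem (hS : Sᶜ.Finite) (hn : n ≠ 0) (i : ℕ) : aperyW S n i ∈ S :=
  (Nat.sInf_mem (exists_mem_modEq hS hn i)).1

theorem aperyW_modEq (hS : Sᶜ.Finite) (hn : n ≠ 0) (i : ℕ) : aperyW S n i ≡ i [MOD n] :=
  (Nat.sInf_mem (exists_mem_modEq hS hn i)).2

theorem aperyW_mod_le (n : ℕ) (hx : x ∈ S) : aperyW S n (x % n) ≤ x :=
  Nat.sInf_le ⟨hx, (Nat.mod_mod x n).symm⟩

theorem exists_aperyW_nsMult_eq (hS : Sᶜ.Finite) (hi0 : 0 < i) (him : i < nsMult S) :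
    ∃ a : ℕ, 1 ≤ a ∧ aperyW S (nsMult S) i = a * nsMult S + i := by
  set m := nsMult S
  set w := aperyW S m i
  have hm : 0 < m := hi0.trans him
  have hwi : w % m = i := Nat.mod_eq_of_modEq (aperyW_modEq hS hm.ne' i) him
  have hw0 : w ≠ 0 := by
    intro hw
    simp only [hw, Nat.zero_mod] at hwi
    exact hi0.ne hwi
  have hmw : m ≤ w := nsMult_le (aperyW_mem hS hm.ne' i) hw0
  exact ⟨w / m, Nat.div_pos hmw hm, by rw [← hwi, Nat.div_add_mod']⟩

theorem isLeast_aperyW (hS : Sᶜ.Finite) (hi0 : 0 < i) (hin : i < n)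
    (hmin : ∀ j, 0 < j → j < n → aperyW S n i ≤ aperyW S n j) :
    IsLeast {s ∈ S | ¬ n ∣ s} (aperyW S n i) := by
  have hn : 0 < n := hi0.trans hin
  refine ⟨⟨aperyW_mem hS hn.ne' i, fun hdvd ↦ ?_⟩, fun s ⟨hsS, hs⟩ ↦ ?_⟩
  · exact Nat.not_dvd_of_pos_of_lt hi0 hin (((aperyW_modEq hS hn.ne' i).dvd_iff dvd_rfl).1 hdvd)
  · have hs0 : 0 < s % n := Nat.emod_pos_of_not_dvd hs
    exact (hmin (s % n) hs0 (Nat.mod_lt s hn)).trans (aperyW_mod_le n hsS)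

theorem mem_msg_of_isLeast (hx : IsLeast {s ∈ S | ¬ n ∣ s} x) : x ∈ msg S := by
  obtain ⟨⟨hxS, hnx⟩, hmin⟩ := hx
  have dvd_of_lt : ∀ s ∈ S, s < x → n ∣ s := fun s hs hsx ↦
    by_contra fun hns ↦ (hmin ⟨hs, hns⟩).not_gt hsx
  refine ⟨hxS, fun hx0 ↦ hnx (hx0 ▸ dvd_zero n), ?_⟩
  rintro a ha ha0 b hb hb0 rfl
  exact hnx (dvd_add (dvd_of_lt a ha (by lia)) (dvd_of_lt b hb (by lia)))

theorem not_dvd_of_mem_msg (hadd : ∀ a ∈ S, ∀ b ∈ S, a + b ∈ S) (hn : n ∈ S) (hx : x ∈ msg S)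
    (hxn : x ≠ n) : ¬ n ∣ x := by
  rintro ⟨k, rfl⟩
  obtain ⟨-, hnk0, hirr⟩ := hx
  obtain ⟨hn0, hk0⟩ := mul_ne_zero_iff.1 hnk0
  have mul_mem : ∀ l, 1 ≤ l → n * l ∈ S :=
    Nat.le_induction (by rwa [mul_one]) fun l _ hl ↦ hadd _ hl _ hn
  have hk1 : k ≠ 1 := fun hk ↦ hxn (by rw [hk, mul_one])
  obtain ⟨l, hl, rfl⟩ : ∃ l, 1 ≤ l ∧ k = l + 1 := ⟨k - 1, by lia, by lia⟩
  exact hirr (n * l) (mul_mem l hl) (mul_ne_zero hn0 (by lia)) n hn hn0 (mul_add_one n l)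

theorem nsRatio_eq_of_isLeast (hadd : ∀ a ∈ S, ∀ b ∈ S, a + b ∈ S)
    (hx : IsLeast {s ∈ S | ¬ nsMult S ∣ s} x) : nsRatio S = x := by
  have hxm : x ≠ nsMult S := fun h ↦ hx.1.2 h.symm.dvd
  refine IsLeast.csInf_eq ⟨⟨mem_msg_of_isLeast hx, hxm⟩, fun y ⟨hy, hym⟩ ↦ ?_⟩
  exact hx.2 ⟨hy.1, not_dvd_of_mem_msg hadd (nsMult_mem hy.1 hy.2.1) hy hym⟩

theorem IsMANS.strictMonoOn_aperyW (hM : IsMANS S) :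
    StrictMonoOn (aperyW S (nsMult S)) (Set.Ioo 0 (nsMult S)) :=
  strictMonoOn_of_lt_add_one Set.ordConnected_Ioo fun i _ hi hi' ↦ hM.2 i hi.1 hi'.2

end

theorem stmt1_general (S : Set ℕ) (hS : IsNumSgp S) (i : ℕ) (hi0 : 0 < i) (him : i < nsMult S)
    (hmin : ∀ j, 0 < j → j < nsMult S → aperyW S (nsMult S) i ≤ aperyW S (nsMult S) j) :
    ∃ a : ℕ, 1 ≤ a ∧ nsRatio S = a * nsMult S + i := by
  obtain ⟨-, hadd, hfin⟩ := hS
  have ratio_eq : nsRatio S = aperyW S (nsMult S) i :=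
    nsRatio_eq_of_isLeast hadd (isLeast_aperyW hfin hi0 him hmin)
  rw [ratio_eq]
  exact exists_aperyW_nsMult_eq hfin hi0 him

theorem stmt1 (S : Set ℕ) (hS : IsNumSgp S) (hm : 2 ≤ nsMult S) (hM : IsMANS S) :
    ∃ a : ℕ, 1 ≤ a ∧ nsRatio S = a * nsMult S + 1 :=
  stmt1_general S hS 1 one_pos hm fun _ hj0 hjm ↦
    hM.strictMonoOn_aperyW.monotoneOn ⟨one_pos, hm⟩ ⟨hj0, hjm⟩ hj0
end

section
/- Let m, a, b, t be natural numbers with m ≥ 3, a ≥ 1, t ∈ {2, …, m−1}, (t−1)(am+1) < bm+t < t(am+1), and S = ⟨m, am+1, bm+t⟩. Writing Ap(S, m) = {w(0), w(1), …, w(m−1)} with w(i) the least element of S congruent to i modulo m, one has w(i) = ⌊i/t⌋·(bm+t) + (i mod t)·(am+1) for every i ∈ {0, 1, …, m−1}. -/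
/-!
With `A = a * m + 1` and `B = b * m + t` one has `B ≡ t * A` modulo `m`, so `y * A + z * B` lies
in the class of `n * A`, where `n = y + t * z` is its weight. Since `B ≤ t * A`, the cheapest
combination of a given weight `n` is the greedy one, of cost `n / t * B + n % t * A`.
Since `(t - 1) * A ≤ B`, the greedy cost is monotone in `n`, so the least element of the class of
`i * A` is the greedy combination of the least weight congruent to `i`, which is `i` itself.
-/

theorem mem_gen_triple {m A B s : ℕ} :
    s ∈ gen {m, A, B} ↔ ∃ x y z : ℕ, x * m + y * A + z * B = s := by
  simp only [gen, SetLike.mem_coe, Set.insert_eq m, AddSubmonoid.closure_union,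
    AddSubmonoid.mem_sup, AddSubmonoid.mem_closure_singleton, AddSubmonoid.mem_closure_pair,
    smul_eq_mul, exists_exists_eq_and, exists_exists_exists_and_eq, add_assoc]

theorem aperyW_congr {S : Set ℕ} {n i j : ℕ} (h : i ≡ j [MOD n]) :
    aperyW S n i = aperyW S n j := by
  rw [aperyW, aperyW, h]

theorem monotone_div_mul_add_mod_mul {t A B : ℕ} (h : (t - 1) * A ≤ B) :
    Monotone fun n : ℕ ↦ n / t * B + n % t * A := by
  refine monotone_nat_of_le_succ fun n ↦ ?_
  by_cases hn : t ∣ n + 1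
  · have hmod : n % t ≤ t - 1 :=
      Nat.le_sub_one_of_lt (Nat.mod_lt n (Nat.pos_of_dvd_of_pos hn n.succ_pos))
    calc n / t * B + n % t * A ≤ n / t * B + (t - 1) * A := by gcongr
      _ ≤ n / t * B + B := by gcongr
      _ = (n + 1) / t * B + (n + 1) % t * A := by
        rw [Nat.succ_div_of_dvd hn, Nat.mod_eq_zero_of_dvd hn]
        ring
  · have hdiv : (n + 1) / t = n / t := Nat.succ_div_of_not_dvd hn
    have hmod : (n + 1) % t = n % t + 1 := by
      have hsucc := Nat.div_add_mod (n + 1) t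
      rw [hdiv] at hsucc
      have hself := Nat.div_add_mod n t
      omega
    rw [hdiv, hmod]
    gcongr
    exact Nat.le_succ _

theorem div_mul_add_mod_mul_le {t A B : ℕ} (ht : 0 < t) (h : B ≤ t * A) (y z : ℕ) :
    (y + t * z) / t * B + (y + t * z) % t * A ≤ y * A + z * B :=
  calc (y + t * z) / t * B + (y + t * z) % t * A
      = y / t * B + y % t * A + z * B := by
        rw [Nat.add_mul_div_left y z ht, Nat.add_mul_mod_self_left]
        ring
    _ ≤ y / t * (t * A) + y % t * A + z * B := by gcongr
    _ = (t * (y / t) + y % t) * A + z * B := by ring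
    _ = y * A + z * B := by rw [Nat.div_add_mod]

theorem mul_add_mul_modEq {m t A B : ℕ} (h : B ≡ t * A [MOD m]) (y z : ℕ) :
    y * A + z * B ≡ (y + t * z) * A [MOD m] :=
  calc y * A + z * B ≡ y * A + z * (t * A) [MOD m] := (h.mul_left z).add_left _
    _ = (y + t * z) * A := by ring

theorem modEq_mul_mul_add_one (m k a : ℕ) : k ≡ k * (a * m + 1) [MOD m] := by
  simp [Nat.ModEq, mul_add, ← mul_assoc]

theorem stmt8_general {m t A B i : ℕ} (hA : m.Coprime A) (hB : B ≡ t * A [MOD m]) (ht : 0 < t)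
    (h1 : (t - 1) * A ≤ B) (h2 : B ≤ t * A) (hi : i < m) :
    aperyW (gen {m, A, B}) m (i * A) = i / t * B + i % t * A := by
  refine IsLeast.csInf_eq ⟨⟨?_, ?_⟩, ?_⟩
  · exact mem_gen_triple.2 ⟨0, i % t, i / t, by ring⟩
  · have hclass := mul_add_mul_modEq hB (i % t) (i / t)
    rwa [Nat.mod_add_div, add_comm] at hclass
  · rintro s ⟨hs, hclass⟩
    obtain ⟨x, y, z, rfl⟩ := mem_gen_triple.1 hs
    have hweight : y + t * z ≡ i [MOD m] := by
      refine Nat.ModEq.cancel_right_of_coprime hA ((mul_add_mul_modEq hB y z).symm.trans ?_)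
      rwa [add_assoc, Nat.mul_add_mod_self_right] at hclass
    have hle : i ≤ y + t * z := by
      rw [← Nat.mod_eq_of_lt hi, ← hweight]
      exact Nat.mod_le _ _
    calc i / t * B + i % t * A
        ≤ (y + t * z) / t * B + (y + t * z) % t * A := monotone_div_mul_add_mod_mul h1 hle
      _ ≤ y * A + z * B := div_mul_add_mod_mul_le ht h2 y z
      _ ≤ x * m + y * A + z * B := by omega

theorem stmt8 (m a b t : ℕ) (hm : 3 ≤ m) (ha : 1 ≤ a) (ht2 : 2 ≤ t) (htm : t ≤ m - 1)
    (h1 : (t - 1) * (a * m + 1) < b * m + t) (h2 : b * m + t < t * (a * m + 1)) :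
    ∀ i : ℕ, i < m →
      aperyW (gen {m, a * m + 1, b * m + t}) m i =
        (i / t) * (b * m + t) + (i % t) * (a * m + 1) := by
  intro i hi
  have ht : b * m + t ≡ t [MOD m] := by simp [Nat.ModEq]
  rw [aperyW_congr (modEq_mul_mul_add_one m i a)]
  exact stmt8_general (by simp) (ht.trans (modEq_mul_mul_add_one m t a)) (by omega) h1.le h2.le hi
end

section
/- Let S = ⟨m, am+1, bm+t⟩ be a MANS-semigroup with embedding dimension 3, where m ≥ 3, a ≥ 1, t ∈ {2, …, m−1}, and (t−1)(am+1) < bm+t < t(am+1). Set q = ⌊(m−1)/t⌋ and r = (m−1) mod t. Then {q(bm+t) + r(am+1) − m} ⊆ PF(S) ⊆ {(q−1)(bm+t) + (t−1)(am+1) − m, q(bm+t) + r(am+1) − m}. -/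
/-!
Put `u = a * m + 1` and `v = b * m + t`, and give `n = (n / t) * t + n % t` the weight
`w n = (n / t) * v + (n % t) * u`. Since `v < t * u`, trading `t` copies of `u` for one `v` lowers
the weight and preserves the residue modulo `m`; since `(t - 1) * u < v`, the function `w` is
strictly increasing. Hence `w 0 < ⋯ < w (m - 1)` are exactly the Apéry elements of `⟨m, u, v⟩`.
Pseudo-Frobenius numbers are the `s - m` with `s` an Apéry element from which no generator leads to
another one. Here `w i + v = w (i + t)`, while `w i + u` equals `w (i + 1)` unless `t ∣ i + 1`, in
which case it is larger. So `i` must satisfy `m ≤ i + t` and either `i = m - 1` or `t ∣ i + 1`,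
which leaves only `i = m - 1` and `i = q * t - 1`.
-/

section PseudoFrobenius

variable {A : Set ℕ} {m s : ℕ}

theorem exists_ne_zero_add_of_mem_gen (hs : s ∈ gen A) (hs0 : s ≠ 0) :
    ∃ a ∈ A, a ≠ 0 ∧ ∃ s' ∈ gen A, a + s' = s := by
  induction hs using AddSubmonoid.closure_induction_left with
  | zero => exact absurd rfl hs0
  | add_left a ha s' hs' ih =>
    rcases eq_or_ne a 0 with rfl | ha0
    · simpa only [zero_add] using ih (by simpa only [zero_add] using hs0)
    · exact ⟨a, ha, ha0, s', hs', rfl⟩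

theorem add_notMem_aperySet {S : Set ℕ} (hs : s ∈ S) : s + m ∉ AperySet S m :=
  fun h ↦ h.2 ⟨s, hs, rfl⟩

theorem mem_nsPF_gen_iff (hm : m ∈ A) (hm0 : m ≠ 0) {x : ℤ} :
    x ∈ nsPF (gen A) ↔ ∃ s ∈ AperySet (gen A) m,
      (∀ a ∈ A, a ≠ 0 → s + a ∉ AperySet (gen A) m) ∧ x = s - m := by
  have subset_gen : A ⊆ gen A := AddSubmonoid.subset_closure
  constructor
  · rintro ⟨hx, hadd⟩
    obtain ⟨s, hs, hsx⟩ := hadd m (subset_gen hm) hm0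
    refine ⟨s, ⟨hs, ?_⟩, fun a ha ha0 hsa ↦ ?_, by lia⟩
    · rintro ⟨y, hy, hys⟩
      exact hx ⟨y, hy, by lia⟩
    · obtain ⟨y, hy, hyx⟩ := hadd a (subset_gen ha) ha0
      exact hsa.2 ⟨y, hy, by lia⟩
  · rintro ⟨s, ⟨hs, hsm⟩, hmax, rfl⟩
    refine ⟨?_, fun s' hs' hs0 ↦ ?_⟩
    · rintro ⟨y, hy, hys⟩
      exact hsm ⟨y, hy, by lia⟩
    · obtain ⟨a, ha, ha0, s'', hs'', rfl⟩ := exists_ne_zero_add_of_mem_gen hs' hs0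
      have hsa : s + a ∈ gen A := AddSubmonoid.add_mem _ hs (subset_gen ha)
      obtain ⟨y, hy, hys⟩ : ∃ y ∈ gen A, y + m = s + a := by
        by_contra hno
        exact hmax a ha ha0 ⟨hsa, hno⟩
      exact ⟨y + s'', AddSubmonoid.add_mem _ hy hs'', by lia⟩

end PseudoFrobenius

/-- The weight of the greedy representation `n = (n / t) * t + (n % t) * 1`, where each summand `t`
weighs `v` and each summand `1` weighs `u`. For `n < m` it is the Apéry element `w(n)` of the
semigroup `⟨m, u, v⟩`, but it is defined for every `n`. -/
def greedyWeight (u v t n : ℕ) : ℕ := n / t * v + n % t * u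

section GreedyWeight

variable {m u v t n : ℕ}

theorem greedyWeight_zero : greedyWeight u v t 0 = 0 := by
  simp [greedyWeight]

theorem greedyWeight_mul_self (ht : 0 < t) (k : ℕ) : greedyWeight u v t (k * t) = k * v := by
  rw [greedyWeight, Nat.mul_div_cancel k ht, Nat.mul_mod_left, zero_mul, add_zero]

theorem greedyWeight_add_self (ht : 0 < t) (n : ℕ) :
    greedyWeight u v t (n + t) = greedyWeight u v t n + v := by
  rw [greedyWeight, greedyWeight, Nat.add_div_right n ht, Nat.add_mod_right]
  ring

theorem greedyWeight_succ_of_not_dvd (h : ¬ t ∣ n + 1) :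
    greedyWeight u v t (n + 1) = greedyWeight u v t n + u := by
  have hdiv : (n + 1) / t = n / t := Nat.succ_div_of_not_dvd h
  have hmod : (n + 1) % t = n % t + 1 := by
    have hn := Nat.div_add_mod n t
    have hn' := Nat.div_add_mod (n + 1) t
    rw [hdiv] at hn'
    lia
  rw [greedyWeight, greedyWeight, hdiv, hmod]
  ring

theorem greedyWeight_succ_of_dvd (h : t ∣ n + 1) :
    greedyWeight u v t (n + 1) + t * u = greedyWeight u v t n + u + v := by
  have hdiv : (n + 1) / t = n / t + 1 := Nat.succ_div_of_dvd h
  have hmod : (n + 1) % t = 0 := Nat.mod_eq_zero_of_dvd h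
  have hmod' : n % t + 1 = t := by
    have hn := Nat.div_add_mod n t
    have hn' := Nat.div_add_mod (n + 1) t
    rw [hdiv, hmod, mul_add] at hn'
    lia
  calc greedyWeight u v t (n + 1) + t * u
      = (n / t + 1) * v + (n % t + 1) * u := by
        rw [greedyWeight, hdiv, hmod, hmod', zero_mul, add_zero]
    _ = greedyWeight u v t n + u + v := by
        rw [greedyWeight]
        ring

theorem greedyWeight_succ_lt_of_dvd (hvu : v < t * u) (h : t ∣ n + 1) :
    greedyWeight u v t (n + 1) < greedyWeight u v t n + u := by
  have := greedyWeight_succ_of_dvd (u := u) (v := v) h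
  lia

theorem greedyWeight_succ_le (hvu : v < t * u) (n : ℕ) :
    greedyWeight u v t (n + 1) ≤ greedyWeight u v t n + u := by
  by_cases h : t ∣ n + 1
  · exact (greedyWeight_succ_lt_of_dvd hvu h).le
  · exact (greedyWeight_succ_of_not_dvd h).le

theorem greedyWeight_add_add_of_succ_eq_mul (ht : 0 < t) {k : ℕ} (h : n + 1 = k * t) :
    greedyWeight u v t n + u + v = k * v + t * u := by
  rw [← greedyWeight_succ_of_dvd (h ▸ dvd_mul_left t k), h, greedyWeight_mul_self ht]

theorem greedyWeight_strictMono (hu : 0 < u) (huv : t * u < v + u) :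
    StrictMono (greedyWeight u v t) := by
  refine strictMono_nat_of_lt_succ fun n ↦ ?_
  by_cases h : t ∣ n + 1
  · have := greedyWeight_succ_of_dvd (u := u) (v := v) h
    lia
  · rw [greedyWeight_succ_of_not_dvd h]
    lia

theorem greedyWeight_add_mul_le (hvu : v < t * u) (y z : ℕ) :
    greedyWeight u v t (y + z * t) ≤ y * u + z * v := by
  have ht : 0 < t := Nat.pos_of_mul_pos_right (Nat.zero_lt_of_lt hvu)
  induction z with
  | zero =>
    induction y with
    | zero => simp [greedyWeight_zero]
    | succ y ih =>
      have := greedyWeight_succ_le hvu y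
      lia
  | succ z ih =>
    rw [add_one_mul, ← add_assoc, greedyWeight_add_self ht]
    lia

theorem greedyWeight_modEq (hu : u ≡ 1 [MOD m]) (hv : v ≡ t [MOD m]) (n : ℕ) :
    greedyWeight u v t n ≡ n [MOD m] := by
  have h : greedyWeight u v t n ≡ n / t * t + n % t * 1 [MOD m] :=
    (hv.mul_left _).add (hu.mul_left _)
  rwa [mul_one, mul_comm, Nat.div_add_mod] at h

end GreedyWeight

section GenTriple

variable {m u v t : ℕ}

theorem mem_gen_triple_iff {s : ℕ} :
    s ∈ gen {m, u, v} ↔ ∃ c y z : ℕ, c * m + y * u + z * v = s := by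
  have h : s ∈ gen {m, u, v} ↔ s ∈ Submodule.span ℕ {m, u, v} := by
    rw [← Submodule.mem_toAddSubmonoid, Submodule.span_nat_eq_addSubmonoidClosure]
    rfl
  rw [h, Submodule.mem_span_triple]
  rfl

theorem mem_gen_iff_exists_greedyWeight_le (hu : u ≡ 1 [MOD m]) (hv : v ≡ t [MOD m])
    (hvu : v < t * u) {s : ℕ} :
    s ∈ gen {m, u, v} ↔ ∃ n, greedyWeight u v t n ≤ s ∧ n ≡ s [MOD m] := by
  rw [mem_gen_triple_iff]
  constructor
  · rintro ⟨c, y, z, rfl⟩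
    refine ⟨y + z * t, ?_, ?_⟩
    · have := greedyWeight_add_mul_le hvu y z
      lia
    · have hc : 0 ≡ c * m [MOD m] := (Nat.modEq_zero_iff_dvd.2 (dvd_mul_left m c)).symm
      simpa only [zero_add, mul_one] using
        (hc.add (hu.symm.mul_left y)).add (hv.symm.mul_left z)
  · rintro ⟨n, hle, hn⟩
    obtain ⟨c, hc⟩ := (Nat.modEq_iff_dvd' hle).1 ((greedyWeight_modEq hu hv n).trans hn)
    refine ⟨c, n % t, n / t, ?_⟩
    unfold greedyWeight at hle hc
    lia

theorem aperySet_gen_triple (hu : u ≡ 1 [MOD m]) (hv : v ≡ t [MOD m])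
    (huv : t * u < v + u) (hvu : v < t * u) :
    AperySet (gen {m, u, v}) m = greedyWeight u v t '' Set.Iio m := by
  have mem_gen {s : ℕ} := mem_gen_iff_exists_greedyWeight_le hu hv hvu (s := s)
  have hmod := greedyWeight_modEq hu hv
  have hmono := greedyWeight_strictMono (Nat.pos_of_mul_pos_left (Nat.zero_lt_of_lt hvu)) huv
  have exists_add_eq {n s : ℕ} (hle : greedyWeight u v t n + m ≤ s) (hns : n ≡ s [MOD m]) :
      ∃ y ∈ gen {m, u, v}, y + m = s := by
    obtain ⟨y, rfl⟩ := Nat.exists_eq_add_of_le' (le_of_add_le_right hle)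
    exact ⟨y, mem_gen.2 ⟨n, Nat.le_of_add_le_add_right hle, hns.trans Nat.add_modEq_right⟩, rfl⟩
  ext s
  constructor
  · rintro ⟨hs, hsm⟩
    obtain ⟨n, hle, hns⟩ := mem_gen.1 hs
    obtain rfl : greedyWeight u v t n = s := by
      refine hle.eq_of_not_lt fun hlt ↦ hsm ?_
      exact exists_add_eq (((hmod n).trans hns).add_le_of_lt hlt) hns
    refine ⟨n, Set.mem_Iio.2 (lt_of_not_ge fun hmn ↦ hsm ?_), rfl⟩
    obtain ⟨k, rfl⟩ := Nat.exists_eq_add_of_le hmn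
    have hwk : greedyWeight u v t k + m ≤ greedyWeight u v t (m + k) :=
      (add_comm _ _).trans_le (hmono.add_le_nat m k)
    exact exists_add_eq hwk (Nat.add_modEq_left.symm.trans hns)
  · rintro ⟨i, hi, rfl⟩
    refine ⟨mem_gen.2 ⟨i, le_rfl, (hmod i).symm⟩, ?_⟩
    rintro ⟨y, hy, hyi⟩
    obtain ⟨n, hle, hny⟩ := mem_gen.1 hy
    have hmi : i ≡ n [MOD m] :=
      calc i ≡ y + m [MOD m] := hyi ▸ (hmod i).symm
        _ ≡ y [MOD m] := Nat.add_modEq_right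
        _ ≡ n [MOD m] := hny.symm
    have hin : i ≤ n := hmi.le_of_lt_add (Nat.lt_add_left n hi)
    have hwin := hmono.monotone hin
    have hm : 0 < m := Nat.zero_lt_of_lt hi
    lia

theorem greedyWeight_mem_aperySet (hu : u ≡ 1 [MOD m]) (hv : v ≡ t [MOD m])
    (huv : t * u < v + u) (hvu : v < t * u) {i : ℕ} (hi : i < m) :
    greedyWeight u v t i ∈ AperySet (gen {m, u, v}) m := by
  rw [aperySet_gen_triple hu hv huv hvu]
  exact Set.mem_image_of_mem _ hi

theorem greedyWeight_add_left_mem_aperySet_iff (hu : u ≡ 1 [MOD m]) (hv : v ≡ t [MOD m])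
    (huv : t * u < v + u) (hvu : v < t * u) {i : ℕ} :
    greedyWeight u v t i + u ∈ AperySet (gen {m, u, v}) m ↔ i + 1 < m ∧ ¬ t ∣ i + 1 := by
  have hmono := greedyWeight_strictMono (Nat.pos_of_mul_pos_left (Nat.zero_lt_of_lt hvu)) huv
  rw [aperySet_gen_triple hu hv huv hvu]
  constructor
  · rintro ⟨j, hj, hji⟩
    have hle : i + 1 ≤ j := hmono.le_iff_le.1 (hji ▸ greedyWeight_succ_le hvu i)
    have hmod : j ≡ i + 1 [MOD m] :=
      calc j ≡ greedyWeight u v t j [MOD m] := (greedyWeight_modEq hu hv j).symm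
        _ = greedyWeight u v t i + u := hji
        _ ≡ i + 1 [MOD m] := (greedyWeight_modEq hu hv i).add hu
    have hi' : i + 1 < m := hle.trans_lt hj
    obtain rfl := hmod.eq_of_lt_of_lt hj hi'
    exact ⟨hi', fun hdvd ↦ (greedyWeight_succ_lt_of_dvd hvu hdvd).ne hji⟩
  · rintro ⟨hi', hdvd⟩
    exact ⟨i + 1, hi', greedyWeight_succ_of_not_dvd hdvd⟩

theorem greedyWeight_add_right_mem_aperySet_iff (hu : u ≡ 1 [MOD m]) (hv : v ≡ t [MOD m])
    (huv : t * u < v + u) (hvu : v < t * u) {i : ℕ} :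
    greedyWeight u v t i + v ∈ AperySet (gen {m, u, v}) m ↔ i + t < m := by
  have hmono := greedyWeight_strictMono (Nat.pos_of_mul_pos_left (Nat.zero_lt_of_lt hvu)) huv
  have ht : 0 < t := Nat.pos_of_mul_pos_right (Nat.zero_lt_of_lt hvu)
  rw [aperySet_gen_triple hu hv huv hvu, ← greedyWeight_add_self ht,
    hmono.injective.mem_set_image, Set.mem_Iio]

theorem mem_nsPF_gen_triple_iff (hm : m ≠ 0) (hu : u ≡ 1 [MOD m]) (hv : v ≡ t [MOD m])
    (huv : t * u < v + u) (hvu : v < t * u) {x : ℤ} :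
    x ∈ nsPF (gen {m, u, v}) ↔
      ∃ i < m, (i + 1 < m → t ∣ i + 1) ∧ m ≤ i + t ∧ x = greedyWeight u v t i - m := by
  have hu0 : 0 < u := Nat.pos_of_mul_pos_left (Nat.zero_lt_of_lt hvu)
  have ht0 : 0 < t := Nat.pos_of_mul_pos_right (Nat.zero_lt_of_lt hvu)
  have hv0 : 0 < v := by
    have := Nat.le_mul_of_pos_left u ht0
    lia
  have hmax {i : ℕ} (hi : i < m) :
      (∀ a ∈ ({m, u, v} : Set ℕ), a ≠ 0 →
        greedyWeight u v t i + a ∉ AperySet (gen {m, u, v}) m) ↔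
      (i + 1 < m → t ∣ i + 1) ∧ m ≤ i + t := by
    have hadd_m := add_notMem_aperySet (m := m) (greedyWeight_mem_aperySet hu hv huv hvu hi).1
    simp only [Set.mem_insert_iff, Set.mem_singleton_iff, forall_eq_or_imp, forall_eq, ne_eq, hm,
      hu0.ne', hv0.ne', not_false_eq_true, forall_const, hadd_m, true_and,
      greedyWeight_add_left_mem_aperySet_iff hu hv huv hvu,
      greedyWeight_add_right_mem_aperySet_iff hu hv huv hvu, not_and, not_not, not_lt]
  rw [mem_nsPF_gen_iff (Set.mem_insert m _) hm]
  constructor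
  · rintro ⟨s, hs, hsmax, rfl⟩
    obtain ⟨i, hi, rfl⟩ := aperySet_gen_triple hu hv huv hvu ▸ hs
    obtain ⟨hdvd, hit⟩ := (hmax hi).1 hsmax
    exact ⟨i, hi, hdvd, hit, rfl⟩
  · rintro ⟨i, hi, hdvd, hit, rfl⟩
    exact ⟨greedyWeight u v t i, greedyWeight_mem_aperySet hu hv huv hvu hi,
      (hmax hi).2 ⟨hdvd, hit⟩, rfl⟩

end GenTriple

theorem eq_pred_or_succ_eq_div_mul {m t i : ℕ} (hi : i < m) (hdvd : i + 1 < m → t ∣ i + 1)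
    (hit : m ≤ i + t) : i = m - 1 ∨ i + 1 = (m - 1) / t * t := by
  by_cases hi' : i + 1 < m
  · obtain ⟨k, hk⟩ := hdvd hi'
    have hdiv : (m - 1) / t = k := Nat.div_eq_of_lt_le (by lia) (by lia)
    right
    rw [hdiv, hk, mul_comm]
  · left
    lia

theorem stmt12_general {m u v t q r : ℕ} (hm : m ≠ 0) (hu : u ≡ 1 [MOD m]) (hv : v ≡ t [MOD m])
    (huv : (t - 1) * u < v) (hvu : v < t * u) (hq : q = (m - 1) / t) (hr : r = (m - 1) % t) :
    ({(q : ℤ) * v + (r : ℤ) * u - m} : Set ℤ) ⊆ nsPF (gen {m, u, v}) ∧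
      nsPF (gen {m, u, v}) ⊆
        {((q : ℤ) - 1) * v + ((t : ℤ) - 1) * u - m, (q : ℤ) * v + (r : ℤ) * u - m} := by
  have ht : 0 < t := Nat.pos_of_mul_pos_right (Nat.zero_lt_of_lt hvu)
  have huv' : t * u < v + u := by
    rw [Nat.sub_one_mul] at huv
    lia
  have hPF {x : ℤ} := mem_nsPF_gen_triple_iff hm hu hv huv' hvu (x := x)
  have hlast : (greedyWeight u v t (m - 1) : ℤ) = q * v + r * u := by
    rw [greedyWeight, ← hq, ← hr]
    push_cast
    rfl
  constructor
  · rintro _ rfl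
    exact hPF.2 ⟨m - 1, by lia, by lia, by lia, by rw [hlast]⟩
  · intro x hx
    obtain ⟨i, him, hdvd, hit, rfl⟩ := hPF.1 hx
    rcases eq_pred_or_succ_eq_div_mul him hdvd hit with rfl | hi
    · exact Or.inr (by rw [hlast, Set.mem_singleton_iff])
    · have hw := greedyWeight_add_add_of_succ_eq_mul (u := u) (v := v) ht (hq ▸ hi)
      zify at hw
      exact Or.inl (by linear_combination hw)

theorem stmt12 (m a b t q r : ℕ) (hm : 3 ≤ m) (ha : 1 ≤ a) (ht2 : 2 ≤ t) (htm : t ≤ m - 1)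
    (h1 : (t - 1) * (a * m + 1) < b * m + t) (h2 : b * m + t < t * (a * m + 1))
    (hq : q = (m - 1) / t) (hr : r = (m - 1) % t) :
    ({(q : ℤ) * (b * m + t) + (r : ℤ) * (a * m + 1) - m} : Set ℤ)
        ⊆ nsPF (gen {m, a * m + 1, b * m + t}) ∧
      nsPF (gen {m, a * m + 1, b * m + t}) ⊆
        {((q : ℤ) - 1) * (b * m + t) + ((t : ℤ) - 1) * (a * m + 1) - m,
         (q : ℤ) * (b * m + t) + (r : ℤ) * (a * m + 1) - m} := by
  have hu : a * m + 1 ≡ 1 [MOD m] := by simp [Nat.ModEq]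
  have hv : b * m + t ≡ t [MOD m] := by simp [Nat.ModEq]
  simpa only [Nat.cast_add, Nat.cast_mul, Nat.cast_one] using
    stmt12_general (by lia) hu hv h1 h2 hq hr
end
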